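/- Let rA, rB, rC be rational numbers and ra, rb, rc elements of ℚ ∪ {+∞}. Then there exist rational numbers r, s, t such that, setting α = rA + 4r, β = rB + 4s, γ = rC + 4t, δ = ra + 2s + 2t, ε = rb + 2r + 2t, ζ = rc + 2r + 2s, all six values α, β, γ, δ, ε, ζ are ≥ 0 and each of the six sets {α, β, ζ}, {α, ε, γ}, {δ, β, γ}, {α, ε, ζ}, {δ, β, ζ}, {δ, ε, γ} contains an element equal to 0. -/

import Mathlib

/-!
Put `u = rA + 4r`, `v = rB + 4s`, `w = rC + 4t`. The conditions of non-negativity become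
`u, v, w ≥ 0` and `v + w ≥ p`, `u + w ≥ q`, `u + v ≥ m` with `p, q, m` in `ℚ ∪ {-∞}`. At a point
of this polyhedron where `u + v + w` is minimal, none of the directions `(-1, 0, 0)`, `(-1, -1, 1)`
and their permutations can be feasible, and the constraints which obstruct these six directions are
exactly the six sets of the theorem.

The bounds `p, q, m` may be replaced by their positive parts (`exists_bound`): this does not change
the polyhedron, and if, say, `v + w = p = 0` then `v = w = 0`, while every set that contains `a`
also contains `B` or `C`. For finite non-negative bounds a minimal point can be
written down explicitly (`exists_tight_point`).
-/

/-- A point of the polyhedron `u, v, w ≥ 0`, `v + w ≥ p`, `u + w ≥ q`, `u + v ≥ m` at which each of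
the six sets of constraints contains an equality. If `p, q, m` satisfy the triangle inequalities,
all three of `v + w = p`, `u + w = q`, `u + v = m` can be solved; otherwise one bound, say `p`,
exceeds the sum of the other two, and `(0, m, p - m)` works. -/
theorem exists_tight_point (p q m : ℚ) (hp : 0 ≤ p) (hq : 0 ≤ q) (hm : 0 ≤ m) :
    ∃ u v w : ℚ, (0 ≤ u ∧ 0 ≤ v ∧ 0 ≤ w ∧ p ≤ v + w ∧ q ≤ u + w ∧ m ≤ u + v) ∧
      (u = 0 ∨ v = 0 ∨ u + v = m) ∧ (u = 0 ∨ u + w = q ∨ w = 0) ∧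
      (v + w = p ∨ v = 0 ∨ w = 0) ∧ (u = 0 ∨ u + w = q ∨ u + v = m) ∧
      (v + w = p ∨ v = 0 ∨ u + v = m) ∧ (v + w = p ∨ u + w = q ∨ w = 0) := by
  by_cases h1 : q + m < p
  · refine ⟨0, m, p - m, ⟨?_, ?_, ?_, ?_, ?_, ?_⟩, ?_⟩ <;> first | linarith | simp
  by_cases h2 : p + m < q
  · refine ⟨m, 0, q - m, ⟨?_, ?_, ?_, ?_, ?_, ?_⟩, ?_⟩ <;> first | linarith | simp
  by_cases h3 : p + q < m
  · refine ⟨q, m - q, 0, ⟨?_, ?_, ?_, ?_, ?_, ?_⟩, ?_⟩ <;> first | linarith | simp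
  have e1 : (p + m - q) / 2 + (p + q - m) / 2 = p := by ring
  have e2 : (q + m - p) / 2 + (p + q - m) / 2 = q := by ring
  have e3 : (q + m - p) / 2 + (p + m - q) / 2 = m := by ring
  refine ⟨(q + m - p) / 2, (p + m - q) / 2, (p + q - m) / 2, ⟨?_, ?_, ?_, ?_, ?_, ?_⟩, ?_⟩
  all_goals first | linarith | simp [e1, e2, e3]

/-- The condition `0 ≤ e + x`, with `e` possibly infinite, as a lower bound on `2 * x + d`. The
bound is truncated at `0`, so reaching it forces `e + x = 0` only when it is positive. -/
theorem exists_bound (e : WithTop ℚ) (d : ℚ) :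
    ∃ p : ℚ, 0 ≤ p ∧ (∀ x : ℚ, p ≤ 2 * x + d → 0 ≤ e + (x : WithTop ℚ)) ∧
      (p = 0 ∨ ∀ x : ℚ, 2 * x + d = p → e + (x : WithTop ℚ) = 0) := by
  induction e using WithTop.recTopCoe with
  | top => exact ⟨0, le_rfl, by simp, Or.inl rfl⟩
  | coe k =>
    refine ⟨max 0 (d - 2 * k), le_max_left _ _, fun x hx => ?_, ?_⟩
    · have := (le_max_right 0 (d - 2 * k)).trans hx
      have h : 0 ≤ k + x := by linarith
      exact_mod_cast h
    · rcases max_choice 0 (d - 2 * k) with h | h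
      · exact Or.inl h
      · refine Or.inr fun x hx => ?_
        have h' : k + x = 0 := by linarith
        exact_mod_cast h'

/-- Proposition (norm1): the valuations of the coefficients of the quartic can be
normalized, by a diagonal change of coordinates with rational shifts `r, s, t`, so that
all six (shifted) valuations are non-negative and each of the six distinguished sets
contains an element of valuation zero.  Coefficients `a, b, c` may vanish, so their
valuations lie in `ℚ ∪ {+∞}`, modeled by `WithTop ℚ`. -/
theorem stmt_1 (rA rB rC : ℚ) (ra rb rc : WithTop ℚ) :
    ∃ r s t : ℚ,
      (0 ≤ rA + 4*r ∧ 0 ≤ rB + 4*s ∧ 0 ≤ rC + 4*t ∧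
        0 ≤ ra + ((2*s + 2*t : ℚ) : WithTop ℚ) ∧
        0 ≤ rb + ((2*r + 2*t : ℚ) : WithTop ℚ) ∧
        0 ≤ rc + ((2*r + 2*s : ℚ) : WithTop ℚ)) ∧
      -- {A, B, c}
      (rA + 4*r = 0 ∨ rB + 4*s = 0 ∨ rc + ((2*r + 2*s : ℚ) : WithTop ℚ) = 0) ∧
      -- {A, b, C}
      (rA + 4*r = 0 ∨ rb + ((2*r + 2*t : ℚ) : WithTop ℚ) = 0 ∨ rC + 4*t = 0) ∧
      -- {a, B, C}
      (ra + ((2*s + 2*t : ℚ) : WithTop ℚ) = 0 ∨ rB + 4*s = 0 ∨ rC + 4*t = 0) ∧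
      -- {A, b, c}
      (rA + 4*r = 0 ∨ rb + ((2*r + 2*t : ℚ) : WithTop ℚ) = 0 ∨
        rc + ((2*r + 2*s : ℚ) : WithTop ℚ) = 0) ∧
      -- {a, B, c}
      (ra + ((2*s + 2*t : ℚ) : WithTop ℚ) = 0 ∨ rB + 4*s = 0 ∨
        rc + ((2*r + 2*s : ℚ) : WithTop ℚ) = 0) ∧
      -- {a, b, C}
      (ra + ((2*s + 2*t : ℚ) : WithTop ℚ) = 0 ∨
        rb + ((2*r + 2*t : ℚ) : WithTop ℚ) = 0 ∨ rC + 4*t = 0) := by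
  obtain ⟨p, hp, hp1, hp2⟩ := exists_bound ra (rB + rC)
  obtain ⟨q, hq, hq1, hq2⟩ := exists_bound rb (rA + rC)
  obtain ⟨m, hm, hm1, hm2⟩ := exists_bound rc (rA + rB)
  obtain ⟨u, v, w, ⟨hu, hv, hw, hvw, huw, huv⟩, h1, h2, h3, h4, h5, h6⟩ :=
    exists_tight_point p q m hp hq hm
  have eA : rA + 4 * ((u - rA) / 4) = u := by ring
  have eB : rB + 4 * ((v - rB) / 4) = v := by ring
  have eC : rC + 4 * ((w - rC) / 4) = w := by ring
  refine ⟨(u - rA) / 4, (v - rB) / 4, (w - rC) / 4, ?_⟩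
  rw [eA, eB, eC]
  have ta : v + w = p → (v = 0 ∧ w = 0) ∨
      ra + ((2 * ((v - rB) / 4) + 2 * ((w - rC) / 4) : ℚ) : WithTop ℚ) = 0 := fun h =>
    hp2.imp (fun h0 => ⟨by linarith, by linarith⟩) fun h0 => h0 _ (by linarith)
  have tb : u + w = q → (u = 0 ∧ w = 0) ∨
      rb + ((2 * ((u - rA) / 4) + 2 * ((w - rC) / 4) : ℚ) : WithTop ℚ) = 0 := fun h =>
    hq2.imp (fun h0 => ⟨by linarith, by linarith⟩) fun h0 => h0 _ (by linarith)
  have tc : u + v = m → (u = 0 ∧ v = 0) ∨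
      rc + ((2 * ((u - rA) / 4) + 2 * ((v - rB) / 4) : ℚ) : WithTop ℚ) = 0 := fun h =>
    hm2.imp (fun h0 => ⟨by linarith, by linarith⟩) fun h0 => h0 _ (by linarith)
  refine ⟨⟨hu, hv, hw, hp1 _ (by linarith), hq1 _ (by linarith), hm1 _ (by linarith)⟩,
    ?_, ?_, ?_, ?_, ?_, ?_⟩
  · clear ta tb; grind only
  · clear ta tc; grind only
  · clear tb tc; grind only
  · clear ta; grind only
  · clear tb; grind only
  · clear tc; grind only
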